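/- Let p be a prime and let G be a finite p-group that is not cyclic of order p (and is non-trivial). Then γ(G) ≤ p + 1. -/

import Mathlib

/-- `D` is a dominating set of the intersection graph `Γ(G)` of the group `G`:
every member of `D` is a proper non-trivial subgroup of `G`, and every proper
non-trivial subgroup of `G` either belongs to `D` or intersects some member of
`D` non-trivially. -/
def IsDomSet {G : Type*} [Group G] (D : Set (Subgroup G)) : Prop :=
  (∀ H ∈ D, H ≠ ⊥ ∧ H ≠ ⊤) ∧
    ∀ K : Subgroup G, K ≠ ⊥ → K ≠ ⊤ →
      K ∈ D ∨ ∃ W ∈ D, W ≠ K ∧ K ⊓ W ≠ ⊥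

/-- The domination number `γ(G)`: the smallest cardinality of a dominating set
of the intersection graph `Γ(G)`. -/
noncomputable def domNumber (G : Type*) [Group G] : ℕ :=
  sInf {n : ℕ | ∃ D : Set (Subgroup G), IsDomSet D ∧ D.ncard = n}

/-!
Dominating sets arise from covers of `G` by proper non-trivial subgroups. If the `p`-group `G` has
two distinct maximal subgroups, they are normal of index `p`, hence kernels of homomorphisms
`a, b : G →* C` with `C` of order `p`. The kernels of `a` and of `b / a ^ k` for `k < p` cover `G`:
if `a g ≠ 1`, then `a g` generates `C`, so `b g` is one of its powers. If `G` has only one maximal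
subgroup, that subgroup contains, and hence dominates, all the others.
-/

section DominatingSets

variable {G : Type*} [Group G] {D : Set (Subgroup G)}

theorem IsDomSet.domNumber_le_ncard (hD : IsDomSet D) : domNumber G ≤ D.ncard :=
  Nat.sInf_le ⟨D, hD, rfl⟩

theorem isDomSet_of_forall_exists_inf_ne_bot (hD : ∀ H ∈ D, H ≠ ⊥ ∧ H ≠ ⊤)
    (hinf : ∀ K : Subgroup G, K ≠ ⊥ → K ≠ ⊤ → ∃ W ∈ D, K ⊓ W ≠ ⊥) : IsDomSet D := by
  refine ⟨hD, fun K hbot htop => ?_⟩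
  obtain ⟨W, hW, hKW⟩ := hinf K hbot htop
  by_cases hWK : W = K
  · exact .inl (hWK ▸ hW)
  · exact .inr ⟨W, hW, hWK, hKW⟩

theorem isDomSet_of_cover (hD : ∀ H ∈ D, H ≠ ⊥ ∧ H ≠ ⊤) (hcover : ∀ g : G, ∃ W ∈ D, g ∈ W) :
    IsDomSet D := by
  refine isDomSet_of_forall_exists_inf_ne_bot hD fun K hbot _ => ?_
  obtain ⟨g, hgK, hg⟩ := K.bot_or_exists_ne_one.resolve_left hbot
  obtain ⟨W, hW, hgW⟩ := hcover g
  exact ⟨W, hW, fun h => hg ((Subgroup.eq_bot_iff_forall _).1 h g ⟨hgK, hgW⟩)⟩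

theorem isDomSet_singleton {M : Subgroup G} (hbot : M ≠ ⊥) (htop : M ≠ ⊤)
    (hle : ∀ K : Subgroup G, K ≠ ⊤ → K ≤ M) : IsDomSet {M} :=
  isDomSet_of_forall_exists_inf_ne_bot (by simp [hbot, htop]) fun K hK hK' =>
    ⟨M, rfl, by rwa [inf_eq_left.2 (hle K hK')]⟩

theorem domNumber_le_one_of_unique_coatom [IsCoatomic (Subgroup G)] {M : Subgroup G}
    (hM : IsCoatom M) (hbot : M ≠ ⊥) (huniq : ∀ L : Subgroup G, IsCoatom L → L = M) :
    domNumber G ≤ 1 := by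
  have hle (K : Subgroup G) (hK : K ≠ ⊤) : K ≤ M := by
    obtain ⟨L, hL, hKL⟩ := (eq_top_or_exists_le_coatom K).resolve_left hK
    exact huniq L hL ▸ hKL
  simpa using (isDomSet_singleton hbot hM.1 hle).domNumber_le_ncard

end DominatingSets

theorem eq_bot_or_eq_top_of_injective_of_prime_card {G C : Type*} [Group G] [Group C]
    [Fact (Nat.card C).Prime] {f : G →* C} (hf : Function.Injective f) (H : Subgroup G) :
    H = ⊥ ∨ H = ⊤ := by
  rcases (H.map f).eq_bot_or_eq_top_of_prime_card with h | h
  · exact .inl ((H.map_eq_bot_iff_of_injective hf).1 h)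
  · right
    rw [← Subgroup.comap_map_eq_self_of_injective hf H, h, Subgroup.comap_top]

section KernelPencil

variable {G C : Type*} [Group G] [CommGroup C]

/-- The pencil of kernels spanned by two homomorphisms `a, b : G →* C` into a finite group: the
kernels of `a` and of `b / a ^ k` for `k < |C|`. For `C` of prime order these are the points of the
projective line spanned by `a` and `b`; some of the kernels may coincide. -/
def kernelPencil (a b : G →* C) : Set (Subgroup G) :=
  insert a.ker ((fun k : ℕ => (b / a ^ k).ker) '' Set.Iio (Nat.card C))

theorem ncard_kernelPencil_le (a b : G →* C) : (kernelPencil a b).ncard ≤ Nat.card C + 1 :=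
  calc
    _ ≤ ((fun k : ℕ => (b / a ^ k).ker) '' Set.Iio (Nat.card C)).ncard + 1 :=
      Set.ncard_insert_le _ _
    _ ≤ (Set.Iio (Nat.card C)).ncard + 1 :=
      Nat.add_le_add_right (Set.ncard_image_le (Set.finite_Iio _)) 1
    _ = Nat.card C + 1 := by simp

theorem mem_ker_div_pow_iff {a b : G →* C} {k : ℕ} {g : G} :
    g ∈ (b / a ^ k).ker ↔ b g = a g ^ k := by
  rw [MonoidHom.mem_ker, MonoidHom.div_apply, MonoidHom.pow_apply, div_eq_one]

theorem ker_div_pow_ne_top {a b : G →* C} (hab : ¬a.ker ≤ b.ker) (k : ℕ) :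
    (b / a ^ k).ker ≠ ⊤ := by
  refine fun htop => hab fun g hg => ?_
  have hbg : b g = a g ^ k := mem_ker_div_pow_iff.1 (htop ▸ Subgroup.mem_top g)
  rw [MonoidHom.mem_ker] at hg ⊢
  rw [hbg, hg, one_pow]

variable [hC : Fact (Nat.card C).Prime]

theorem exists_mem_kernelPencil (a b : G →* C) (g : G) : ∃ W ∈ kernelPencil a b, g ∈ W := by
  by_cases hg : a g = 1
  · exact ⟨a.ker, .inl rfl, hg⟩
  · obtain ⟨k, hk : a g ^ k = b g⟩ := mem_powers_of_prime_card rfl hg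
    refine ⟨_, .inr ⟨k % Nat.card C, Nat.mod_lt k hC.out.pos, rfl⟩, ?_⟩
    rw [mem_ker_div_pow_iff, pow_mod_natCard, hk]

theorem isDomSet_kernelPencil {a b : G →* C} (ha : a.ker ≠ ⊤) (hab : ¬a.ker ≤ b.ker) :
    IsDomSet (kernelPencil a b) := by
  have ha' : a.ker ≠ ⊥ := fun h => hab (h ▸ bot_le)
  have hker (f : G →* C) : f.ker ≠ ⊥ := fun h =>
    (eq_bot_or_eq_top_of_injective_of_prime_card ((MonoidHom.ker_eq_bot_iff f).1 h) a.ker).elim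
      ha' ha
  refine isDomSet_of_cover ?_ (exists_mem_kernelPencil a b)
  rintro _ (rfl | ⟨k, -, rfl⟩)
  · exact ⟨ha', ha⟩
  · exact ⟨hker _, ker_div_pow_ne_top hab k⟩

end KernelPencil

section PrimeIndex

variable {G : Type*} [Group G] {p : ℕ} [Fact p.Prime]

theorem exists_monoidHom_zmod_ker_eq {M : Subgroup G} [M.Normal] (hM : M.index = p) :
    ∃ f : G →* Multiplicative (ZMod p), f.ker = M := by
  let e : G ⧸ M ≃* Multiplicative (ZMod p) := mulEquivOfPrimeCardEq hM (by simp)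
  refine ⟨(e : G ⧸ M →* Multiplicative (ZMod p)).comp (QuotientGroup.mk' M), ?_⟩
  rw [MonoidHom.ker_mulEquiv_comp, QuotientGroup.ker_mk']

theorem domNumber_le_of_normal_of_index_eq_prime {M L : Subgroup G} [M.Normal] [L.Normal]
    (hM : M.index = p) (hL : L.index = p) (hML : ¬M ≤ L) : domNumber G ≤ p + 1 := by
  obtain ⟨a, rfl⟩ := exists_monoidHom_zmod_ker_eq hM
  obtain ⟨b, rfl⟩ := exists_monoidHom_zmod_ker_eq hL
  have hcard : Nat.card (Multiplicative (ZMod p)) = p := by simp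
  have : Fact (Nat.card (Multiplicative (ZMod p))).Prime := by rwa [hcard]
  have ha : a.ker ≠ ⊤ := fun h => (Fact.out : p.Prime).ne_one (by rw [← hM, h, Subgroup.index_top])
  calc
    domNumber G ≤ (kernelPencil a b).ncard := (isDomSet_kernelPencil ha hML).domNumber_le_ncard
    _ ≤ Nat.card (Multiplicative (ZMod p)) + 1 := ncard_kernelPencil_le a b
    _ = p + 1 := by rw [hcard]

variable [Finite G]

theorem normal_of_isCoatom_of_isPGroup (hG : IsPGroup p G) {M : Subgroup G} (hM : IsCoatom M) :
    M.Normal :=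
  have := hG.isNilpotent
  Subgroup.NormalizerCondition.normal_of_coatom M Group.normalizerCondition_of_isNilpotent hM

theorem index_eq_of_isCoatom_of_isPGroup (hG : IsPGroup p G) {M : Subgroup G} (hM : IsCoatom M) :
    M.index = p := by
  have hp : p.Prime := Fact.out
  obtain ⟨m, hm⟩ := IsPGroup.iff_card.1 (hG.to_subgroup M)
  obtain ⟨n, hn⟩ := hG.index M
  have hn0 : n ≠ 0 := by
    rintro rfl
    exact hM.1 (Subgroup.index_eq_one.1 (by simpa using hn))
  have hdvd : p ^ (m + 1) ∣ Nat.card G := by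
    rw [← M.card_mul_index, hm, hn, pow_succ]
    exact mul_dvd_mul_left _ (dvd_pow_self p hn0)
  obtain ⟨K, hK, hMK⟩ := Sylow.exists_subgroup_card_pow_succ hdvd hm
  have hlt : M < K := hMK.lt_of_ne fun h => by
    rw [← h, hm] at hK
    exact m.succ_ne_self (Nat.pow_right_injective hp.two_le hK).symm
  rw [hM.2 K hlt, Subgroup.card_top, ← M.card_mul_index, hm, pow_succ] at hK
  exact Nat.eq_of_mul_eq_mul_left (pow_pos hp.pos m) hK

end PrimeIndex

/-- A non-trivial finite `p`-group that is not cyclic of order `p` has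
domination number at most `p + 1`. -/
theorem pGroup_domNumber_le {G : Type*} [Group G] [Finite G] [Nontrivial G]
    {p : ℕ} (hp : p.Prime) (hG : IsPGroup p G)
    (hnc : ¬(IsCyclic G ∧ Nat.card G = p)) :
    domNumber G ≤ p + 1 := by
  have : Fact p.Prime := ⟨hp⟩
  obtain ⟨M, hM⟩ := IsCoatomic.exists_coatom (Subgroup G)
  have hMp : M.index = p := index_eq_of_isCoatom_of_isPGroup hG hM
  by_cases huniq : ∀ L : Subgroup G, IsCoatom L → L = M
  · have hbot : M ≠ ⊥ := by
      rintro rfl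
      rw [Subgroup.index_bot] at hMp
      exact hnc ⟨isCyclic_of_prime_card hMp, hMp⟩
    exact (domNumber_le_one_of_unique_coatom hM hbot huniq).trans (Nat.le_add_left 1 p)
  · push Not at huniq
    obtain ⟨L, hL, hne⟩ := huniq
    have hMn : M.Normal := normal_of_isCoatom_of_isPGroup hG hM
    have hLn : L.Normal := normal_of_isCoatom_of_isPGroup hG hL
    have hML : ¬M ≤ L := fun h => hne ((hM.le_iff.1 h).resolve_left hL.1)
    exact domNumber_le_of_normal_of_index_eq_prime hMp
      (index_eq_of_isCoatom_of_isPGroup hG hL) hML
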